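/- arXiv:1606.07135 — 2 statements merged into one kernel-verified Lean document; each statement's English description precedes it below -/
import Mathlib

section
/- Let k have prime characteristic p > 2, let V = kv ⊕ kw, and let G = ⟨g⟩ be the cyclic group of order p acting on V by ᵍv = v, ᵍw = v + w. Define λ(g^i, v) = i g^i for all i, λ(1, w) = λ(g, w) = 0, and λ(g^i, w) = binom(i,2) g^i for i ≥ 2. Then H_{λ,0} is a PBW deformation of S(V)⋊G, but there is no bilinear parameter function κ': V×V → kG ⊕ (V⊗kG) such that H_{λ,0} ≅ H_{0,κ'} as filtered algebras. In particular, the nonmodular untwisting theorem fails in the modular setting. -/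
open TensorProduct

noncomputable section

namespace DeformKoszul

variable (k G V : Type) [Field k] [Group G] [AddCommGroup V] [Module k V]

/-- The free `k`-algebra on the vector space `kG ⊕ V`. -/
abbrev FreeAlg := TensorAlgebra k (MonoidAlgebra k G × V)

/-- The canonical embedding of the group algebra `kG` into the free algebra. -/
def gIn : MonoidAlgebra k G →ₗ[k] FreeAlg k G V :=
  (TensorAlgebra.ι k).comp (LinearMap.inl k (MonoidAlgebra k G) V)

/-- The canonical embedding of `V` into the free algebra. -/
def vIn : V →ₗ[k] FreeAlg k G V :=
  (TensorAlgebra.ι k).comp (LinearMap.inr k (MonoidAlgebra k G) V)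

/-- `V ⊗ kG → FreeAlg`, `v ⊗ x ↦ v·x`. -/
def embVG : V ⊗[k] MonoidAlgebra k G →ₗ[k] FreeAlg k G V :=
  (LinearMap.mul' k _).comp (TensorProduct.map (vIn k G V) (gIn k G V))

variable (ρ : Representation k G V)

/-- The defining relations of `H_{λ,κ}`: `kG` is a subalgebra (with the same unit),
`g·v = (ᵍv)·g + λ(g,v)`, and `v·w = w·v + κ^L(v,w) + κ^C(v,w)`. -/
inductive PRel (lam : G → V →ₗ[k] MonoidAlgebra k G)
    (κC : V →ₗ[k] V →ₗ[k] MonoidAlgebra k G)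
    (κL : V →ₗ[k] V →ₗ[k] (V ⊗[k] MonoidAlgebra k G)) :
    FreeAlg k G V → FreeAlg k G V → Prop
  | unit : PRel lam κC κL (gIn k G V 1) 1
  | gmul (x y : MonoidAlgebra k G) :
      PRel lam κC κL (gIn k G V x * gIn k G V y) (gIn k G V (x * y))
  | act (g : G) (v : V) :
      PRel lam κC κL (gIn k G V (MonoidAlgebra.of k G g) * vIn k G V v)
        (vIn k G V (ρ g v) * gIn k G V (MonoidAlgebra.of k G g) + gIn k G V (lam g v))
  | comm (v w : V) :
      PRel lam κC κL (vIn k G V v * vIn k G V w)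
        (vIn k G V w * vIn k G V v + embVG k G V (κL v w) + gIn k G V (κC v w))

variable (lam : G → V →ₗ[k] MonoidAlgebra k G)
    (κC : V →ₗ[k] V →ₗ[k] MonoidAlgebra k G)
    (κL : V →ₗ[k] V →ₗ[k] (V ⊗[k] MonoidAlgebra k G))

/-- The algebra `H_{λ,κ}`.  For `lam = 0`, `κC = 0`, `κL = 0` this is (the presentation
of) the skew group algebra `S(V) ⋊ G`. -/
abbrev HP := RingQuot (PRel k G V ρ lam κC κL)

/-- The quotient map onto `H_{λ,κ}`. -/
def toHP : FreeAlg k G V →ₐ[k] HP k G V ρ lam κC κL :=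
  RingQuot.mkAlgHom k (PRel k G V ρ lam κC κL)

/-- Degree-`n` part of the free algebra: `kG` has degree 0 and `V` degree 1. -/
def grT : ℕ → Submodule k (FreeAlg k G V)
  | 0 => Subalgebra.toSubmodule (Algebra.adjoin k (Set.range (gIn k G V)))
  | n+1 => grT n * (LinearMap.range (vIn k G V) * grT 0)

/-- Filtration of the free algebra, `kG` in degree 0 and `V` in degree 1. -/
def filtT : ℕ → Submodule k (FreeAlg k G V)
  | 0 => grT k G V 0
  | n+1 => filtT n ⊔ grT k G V (n+1)

/-- The induced filtration on `H_{λ,κ}`. -/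
def filtP (d : ℕ) : Submodule k (HP k G V ρ lam κC κL) :=
  (filtT k G V d).map (toHP k G V ρ lam κC κL).toLinearMap

/-- `H_{λ,κ}` is a PBW deformation of `S(V) ⋊ G`:  the associated graded algebra is
`S(V) ⋊ G`, equivalently (all filtered pieces being finite dimensional) each filtered
piece has the same dimension as the corresponding one of `S(V) ⋊ G = H_{0,0}`. -/
def IsPBWP : Prop :=
  ∀ d, Module.finrank k (filtP k G V ρ lam κC κL d) = Module.finrank k (filtP k G V ρ 0 0 0 d)

section Example8


variable (k : Type) [Field k] (p : ℕ) [Fact p.Prime] [CharP k p]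

/-- scalar of `x = gⁱ`, namely `i` viewed in `k` (well defined since `char k = p`). -/
def cf (x : Multiplicative (ZMod p)) : k := ZMod.castHom (dvd_refl p) k x.toAdd

lemma cf_mul (x y : Multiplicative (ZMod p)) : cf k p (x * y) = cf k p x + cf k p y := by
  simp [cf, toAdd_mul, map_add]

lemma cf_one : cf k p 1 = 0 := by simp [cf]

/-- the distinguished generator `g` of the cyclic group of order `p`. -/
def gg : Multiplicative (ZMod p) := Multiplicative.ofAdd 1


/-- the nilpotent part on `k²`: `f ↦ f(1)·e₀`. -/
def E2 : (Fin 2 → k) →ₗ[k] (Fin 2 → k) :=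
  (LinearMap.single k (fun _ => k) 0).comp (LinearMap.proj 1)

lemma E2sq : (E2 k) * (E2 k) = 0 := by
  ext f i
  simp [E2, Module.End.mul_apply, Pi.single_apply]

/-- the representation of `G = ⟨g⟩ ≅ ℤ/p` on `V = kv ⊕ kw` with `ᵍv = v`,
`ᵍw = v + w` (so `v = e₀`, `w = e₁`). -/
def ρ2 : Representation k (Multiplicative (ZMod p)) (Fin 2 → k) where
  toFun x := 1 + cf k p x • E2 k
  map_one' := by simp [cf_one]
  map_mul' x y := by
    show 1 + cf k p (x * y) • E2 k = (1 + cf k p x • E2 k) * (1 + cf k p y • E2 k)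
    rw [cf_mul, add_smul, mul_add, add_mul, add_mul, mul_one, one_mul, smul_mul_smul_comm,
      E2sq, smul_zero]
    simp only [mul_one]
    abel

/-- `λ(gⁱ, v) = i·gⁱ`, `λ(1,w) = λ(g,w) = 0`, `λ(gⁱ, w) = (i choose 2)·gⁱ = (i(i−1)/2)·gⁱ`. -/
def lam8 : Multiplicative (ZMod p) → (Fin 2 → k) →ₗ[k] MonoidAlgebra k (Multiplicative (ZMod p)) :=
  fun x =>
    (LinearMap.proj 0 : ((Fin 2 → k)) →ₗ[k] k).smulRight
      (cf k p x • MonoidAlgebra.single x (1 : k))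
    + (LinearMap.proj 1 : ((Fin 2 → k)) →ₗ[k] k).smulRight
      ((cf k p x * (cf k p x - 1) / 2) • MonoidAlgebra.single x (1 : k))

end Example8

end DeformKoszul

open DeformKoszul

/-!
If `χ : G → V*` is a cocycle, i.e. `χ(gh) = χ(g) ∘ h + χ(h)`, then `v ↦ ᵍv + χ(g, v)` defines an
affine action of `G` on `S(V)`, and for `λ(g, v) = χ(g, v) g` the algebra `H_{λ,0}` is the skew
group algebra of that action. Hence it has the PBW property for every cocycle. A filtered
isomorphism of `H_{λ,0}` with `H_{0,κ'}` forces, for dimension reasons, `kG ⊕ (V ⊗ kG)` to embed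
into `H_{0,κ'}`. There the relation `gv = ᵍv g` makes `V·kG` a `kG`-bimodule, so the augmentation of
`kG`, extended by zero to `V·kG`, is a functional `δ` that is multiplicative for the action of `kG`
on both sides in degree at most one. Transported to `H_{λ,0}` and applied to
`gv = ᵍv g + χ(g, v) g`, it gives `χ(g, v) = δ(v) - δ(ᵍv)`, so that `χ` is a coboundary. In the
example `ᵍv = v` while `χ(g, v) = 1`.
-/

namespace DeformKoszul

section LinearAlgebra

lemma injective_of_range_le_range {K D W : Type*} [Field K] [AddCommGroup D] [Module K D]
    [FiniteDimensional K D] [AddCommGroup W] [Module K W] {f T : D →ₗ[K] W}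
    (hT : Function.Injective T) (hle : LinearMap.range T ≤ LinearMap.range f) :
    Function.Injective f := by
  have hrank : Module.finrank K D ≤ Module.finrank K (LinearMap.range f) :=
    (LinearMap.finrank_range_of_inj hT).symm.le.trans (Submodule.finrank_mono hle)
  have hker := f.finrank_range_add_finrank_ker
  exact LinearMap.ker_eq_bot.1 (Submodule.finrank_eq_zero.1 (by lia))

variable {R M N A : Type*} [CommSemiring R] [AddCommMonoid M] [Module R M] [AddCommMonoid N]
  [Module R N] [Semiring A] [Algebra R A]

lemma map_mul'_comp_map_map₂_mk (f : M →ₗ[R] A) (g : N →ₗ[R] A) (p : Submodule R M)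
    (q : Submodule R N) :
    (Submodule.map₂ (TensorProduct.mk R M N) p q).map (LinearMap.mul' R A ∘ₗ TensorProduct.map f g)
      = p.map f * q.map g := by
  rw [Submodule.map_map₂, Submodule.mul_eq_map₂, Submodule.map₂_map_map]
  rfl

lemma range_mul'_comp_map (f : M →ₗ[R] A) (g : N →ₗ[R] A) :
    LinearMap.range (LinearMap.mul' R A ∘ₗ TensorProduct.map f g)
      = LinearMap.range f * LinearMap.range g := by
  rw [LinearMap.range_eq_map, ← TensorProduct.map₂_mk_top_top_eq_top, map_mul'_comp_map_map₂_mk,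
    ← LinearMap.range_eq_map, ← LinearMap.range_eq_map]

end LinearAlgebra

section SymmetricAlgebra

variable {R M A : Type*} [CommSemiring R] [AddCommMonoid M] [Module R M] [Semiring A]
  [Algebra R A]

/-- The extension of a linear map with pairwise commuting values to the symmetric algebra. Unlike
in `SymmetricAlgebra.lift`, the target need not be commutative. -/
def symLift (f : M →ₗ[R] A) (hf : ∀ v w, Commute (f v) (f w)) : SymmetricAlgebra R M →ₐ[R] A :=
  letI S := Algebra.adjoin R (Set.range f)
  have : IsMulCommutative S := Algebra.isMulCommutative_adjoin R <| by
    rintro _ ⟨v, rfl⟩ _ ⟨w, rfl⟩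
    exact hf v w
  open scoped IsMulCommutative in
  S.val.comp <| SymmetricAlgebra.lift <|
    f.codRestrict (Subalgebra.toSubmodule S) fun v => Algebra.subset_adjoin ⟨v, rfl⟩

@[simp]
lemma symLift_ι (f : M →ₗ[R] A) (hf : ∀ v w, Commute (f v) (f w)) (v : M) :
    symLift f hf (SymmetricAlgebra.ι R M v) = f v := by
  simp only [symLift, AlgHom.comp_apply, SymmetricAlgebra.lift_ι_apply]
  rfl

lemma symmetricAlgebra_algHom_ext {F F' : SymmetricAlgebra R M →ₐ[R] A}
    (h : ∀ v, F (SymmetricAlgebra.ι R M v) = F' (SymmetricAlgebra.ι R M v)) : F = F' := by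
  refine AlgHom.ext fun f => ?_
  induction f using SymmetricAlgebra.induction with
  | algebraMap r => simp
  | ι v => exact h v
  | mul f g hf hg => simp [hf, hg]
  | add f g hf hg => simp [hf, hg]

variable (R M) in
/-- The inclusion `R ⊕ M → S(M)` of the polynomials of degree at most one. -/
def symLinear : R × M →ₗ[R] SymmetricAlgebra R M :=
  LinearMap.coprod (Algebra.linearMap R _) (SymmetricAlgebra.ι R M)

lemma symLinear_injective : Function.Injective (symLinear R M) := by
  let : Module Rᵐᵒᵖ M := Module.compHom _ ((RingHom.id R).fromOpposite mul_comm)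
  have : IsCentralScalar R M := ⟨fun _ _ => rfl⟩
  let F : SymmetricAlgebra R M →ₐ[R] TrivSqZeroExt R M :=
    SymmetricAlgebra.lift (TrivSqZeroExt.inrHom R M)
  have hF : ∀ x, F (symLinear R M x) = TrivSqZeroExt.inl x.1 + TrivSqZeroExt.inr x.2 := by
    intro x
    simp [F, symLinear, TrivSqZeroExt.algebraMap_eq_inl]
  intro x y hxy
  have hinl_inr := (hF x).symm.trans ((congrArg F hxy).trans (hF y))
  exact Prod.ext (by simpa using congrArg TrivSqZeroExt.fst hinl_inr)
    (by simpa using congrArg TrivSqZeroExt.snd hinl_inr)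

end SymmetricAlgebra

section Presentation

variable {k G V : Type} [Field k] [Group G] [AddCommGroup V] [Module k V]
  (ρ : Representation k G V) (lam : G → V →ₗ[k] MonoidAlgebra k G)
  (κC : V →ₗ[k] V →ₗ[k] MonoidAlgebra k G) (κL : V →ₗ[k] V →ₗ[k] V ⊗[k] MonoidAlgebra k G)

/-- The canonical homomorphism `kG → H_{λ,κ}`. -/
def groupHom : MonoidAlgebra k G →ₐ[k] HP k G V ρ lam κC κL :=
  AlgHom.ofLinearMap ((toHP k G V ρ lam κC κL).toLinearMap ∘ₗ gIn k G V)
    ((RingQuot.mkAlgHom_rel k PRel.unit).trans (map_one _))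
    fun x y => (RingQuot.mkAlgHom_rel k (PRel.gmul x y)).symm.trans (map_mul _ _ _)

/-- The canonical linear map `V → H_{λ,κ}`. -/
def vecMap : V →ₗ[k] HP k G V ρ lam κC κL :=
  (toHP k G V ρ lam κC κL).toLinearMap ∘ₗ vIn k G V

lemma groupHom_of_mul_vecMap (g : G) (v : V) :
    groupHom ρ lam κC κL (MonoidAlgebra.of k G g) * vecMap ρ lam κC κL v
      = vecMap ρ lam κC κL (ρ g v) * groupHom ρ lam κC κL (MonoidAlgebra.of k G g)
        + groupHom ρ lam κC κL (lam g v) := by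
  have hrel := RingQuot.mkAlgHom_rel k (PRel.act (ρ := ρ) (lam := lam) (κC := κC) (κL := κL) g v)
  rwa [map_mul, map_add, map_mul] at hrel

lemma commute_vecMap (v w : V) : Commute (vecMap ρ lam 0 0 v) (vecMap ρ lam 0 0 w) := by
  have hrel := RingQuot.mkAlgHom_rel k (PRel.comm (ρ := ρ) (lam := lam) (κC := 0) (κL := 0) v w)
  simp only [LinearMap.zero_apply, map_zero, add_zero, map_mul] at hrel
  exact hrel

section Lift

variable {ρ lam κC κL} {B : Type*} [Semiring B] [Algebra k B]

/-- The universal property of `H_{λ,κ}`: homomorphisms out of it are given by compatible values on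
`kG` and `V`. -/
def liftHP (φ : MonoidAlgebra k G →ₐ[k] B) (ψ : V →ₗ[k] B)
    (hact : ∀ g v, φ (MonoidAlgebra.of k G g) * ψ v
      = ψ (ρ g v) * φ (MonoidAlgebra.of k G g) + φ (lam g v))
    (hcomm : ∀ v w, ψ v * ψ w
      = ψ w * ψ v + LinearMap.mul' k B (TensorProduct.map ψ φ.toLinearMap (κL v w)) + φ (κC v w)) :
    HP k G V ρ lam κC κL →ₐ[k] B :=
  RingQuot.liftAlgHom k ⟨TensorAlgebra.lift k (φ.toLinearMap.coprod ψ), fun _ _ hab => by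
    set F := TensorAlgebra.lift k (φ.toLinearMap.coprod ψ)
    have hg : ∀ a, F (gIn k G V a) = φ a := fun a => by simp [F, gIn]
    have hv : ∀ v, F (vIn k G V v) = ψ v := fun v => by simp [F, vIn]
    have hvg : ∀ t, F (embVG k G V t)
        = LinearMap.mul' k B (TensorProduct.map ψ φ.toLinearMap t) := fun t => by
      induction t using TensorProduct.induction_on with
      | zero => simp
      | tmul v a => simp [embVG, hg, hv]
      | add s t hs ht => simp only [map_add, hs, ht]
    cases hab with
    | unit => simp [hg]
    | gmul x y => simp [hg]
    | act g v => simpa only [map_mul, map_add, hg, hv] using hact g v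
    | comm v w => simpa only [map_mul, map_add, hg, hv, hvg] using hcomm v w⟩

variable (φ : MonoidAlgebra k G →ₐ[k] B) (ψ : V →ₗ[k] B)
    (hact : ∀ g v, φ (MonoidAlgebra.of k G g) * ψ v
      = ψ (ρ g v) * φ (MonoidAlgebra.of k G g) + φ (lam g v))
    (hcomm : ∀ v w, ψ v * ψ w
      = ψ w * ψ v + LinearMap.mul' k B (TensorProduct.map ψ φ.toLinearMap (κL v w)) + φ (κC v w))

@[simp]
lemma liftHP_groupHom (a : MonoidAlgebra k G) :
    liftHP φ ψ hact hcomm (groupHom ρ lam κC κL a) = φ a := by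
  simp [liftHP, groupHom, toHP, gIn]

@[simp]
lemma liftHP_vecMap (v : V) : liftHP φ ψ hact hcomm (vecMap ρ lam κC κL v) = ψ v := by
  simp [liftHP, vecMap, toHP, vIn]

end Lift

section Filtration

/-- The image of `kG` in `H_{λ,κ}`. -/
def groupPart : Submodule k (HP k G V ρ lam κC κL) :=
  LinearMap.range (groupHom ρ lam κC κL).toLinearMap

/-- The image of `V` in `H_{λ,κ}`. -/
def vecPart : Submodule k (HP k G V ρ lam κC κL) :=
  LinearMap.range (vecMap ρ lam κC κL)

lemma groupPart_mul_self :
    groupPart ρ lam κC κL * groupPart ρ lam κC κL = groupPart ρ lam κC κL :=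
  Subalgebra.isIdempotentElem_toSubmodule (groupHom ρ lam κC κL).range

lemma one_le_groupPart : 1 ≤ groupPart ρ lam κC κL :=
  Submodule.one_le.2 ⟨1, map_one (groupHom ρ lam κC κL)⟩

lemma map_toHP_grT_zero :
    (grT k G V 0).map (toHP k G V ρ lam κC κL).toLinearMap = groupPart ρ lam κC κL := by
  have hadj : (Algebra.adjoin k (Set.range (gIn k G V))).map (toHP k G V ρ lam κC κL)
      = (groupHom ρ lam κC κL).range := by
    rw [AlgHom.map_adjoin, ← Set.range_comp]
    exact Algebra.adjoin_eq (groupHom ρ lam κC κL).range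
  rw [grT, ← Subalgebra.map_toSubmodule, hadj]
  rfl

lemma map_toHP_grT_succ (n : ℕ) :
    (grT k G V (n + 1)).map (toHP k G V ρ lam κC κL).toLinearMap
      = (grT k G V n).map (toHP k G V ρ lam κC κL).toLinearMap
        * (vecPart ρ lam κC κL * groupPart ρ lam κC κL) := by
  rw [grT, Submodule.map_mul, Submodule.map_mul, map_toHP_grT_zero, ← LinearMap.range_comp]
  rfl

lemma filtP_zero : filtP k G V ρ lam κC κL 0 = groupPart ρ lam κC κL :=
  map_toHP_grT_zero ρ lam κC κL

lemma filtP_succ (n : ℕ) :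
    filtP k G V ρ lam κC κL (n + 1) = filtP k G V ρ lam κC κL n
      ⊔ filtP k G V ρ lam κC κL n * (vecPart ρ lam κC κL * groupPart ρ lam κC κL) := by
  have hsup : ∀ n, filtP k G V ρ lam κC κL (n + 1) = filtP k G V ρ lam κC κL n
      ⊔ (grT k G V (n + 1)).map (toHP k G V ρ lam κC κL).toLinearMap :=
    fun n => Submodule.map_sup _ _ _
  induction n with
  | zero => rw [hsup, map_toHP_grT_succ]; rfl
  | succ n ih =>
    have hmul : filtP k G V ρ lam κC κL (n + 1) * (vecPart ρ lam κC κL * groupPart ρ lam κC κL)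
        = filtP k G V ρ lam κC κL n * (vecPart ρ lam κC κL * groupPart ρ lam κC κL)
          ⊔ (grT k G V (n + 2)).map (toHP k G V ρ lam κC κL).toLinearMap := by
      rw [hsup, Submodule.sup_mul, ← map_toHP_grT_succ]
    rw [hmul, ← sup_assoc, sup_eq_left.2 (le_sup_right.trans ih.ge), hsup]

lemma groupPart_mul_vecPart_le :
    groupPart ρ lam κC κL * vecPart ρ lam κC κL
      ≤ vecPart ρ lam κC κL * groupPart ρ lam κC κL ⊔ groupPart ρ lam κC κL := by
  rw [Submodule.mul_le]
  rintro _ ⟨a, rfl⟩ _ ⟨v, rfl⟩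
  induction a using MonoidAlgebra.induction_on with
  | of g =>
    rw [AlgHom.toLinearMap_apply, groupHom_of_mul_vecMap]
    exact Submodule.add_mem_sup (Submodule.mul_mem_mul ⟨_, rfl⟩ ⟨_, rfl⟩) ⟨_, rfl⟩
  | add a b ha hb => rw [map_add, add_mul]; exact add_mem ha hb
  | smul r a ha => rw [map_smul, smul_mul_assoc]; exact Submodule.smul_mem _ r ha

lemma groupPart_sup_mul_vecPart_mul_groupPart :
    groupPart ρ lam κC κL
        ⊔ groupPart ρ lam κC κL * (vecPart ρ lam κC κL * groupPart ρ lam κC κL)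
      = (1 ⊔ vecPart ρ lam κC κL) * groupPart ρ lam κC κL := by
  rw [Submodule.sup_mul, one_mul]
  refine le_antisymm (sup_le le_sup_left ?_) (sup_le_sup_left ?_ _)
  · rw [← mul_assoc]
    refine (mul_le_mul_left (groupPart_mul_vecPart_le ρ lam κC κL) _).trans_eq ?_
    rw [Submodule.sup_mul, mul_assoc, groupPart_mul_self, sup_comm]
  · exact le_mul_of_one_le_left' (one_le_groupPart ρ lam κC κL)

lemma filtP_eq (d : ℕ) :
    filtP k G V ρ lam κC κL d = (1 ⊔ vecPart ρ lam κC κL) ^ d * groupPart ρ lam κC κL := by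
  induction d with
  | zero => rw [filtP_zero, pow_zero, one_mul]
  | succ d ih =>
    rw [filtP_succ, ih, mul_assoc, ← Submodule.mul_sup, groupPart_sup_mul_vecPart_mul_groupPart,
      pow_succ, mul_assoc]

end Filtration

section PBW

/-- The comparison map `S(V) ⊗ kG → H_{λ,0}`, `f ⊗ a ↦ f·a`. -/
def pbwMap : SymmetricAlgebra k V ⊗[k] MonoidAlgebra k G →ₗ[k] HP k G V ρ lam 0 0 :=
  LinearMap.mul' k _ ∘ₗ TensorProduct.map (symLift _ (commute_vecMap ρ lam)).toLinearMap
    (groupHom ρ lam 0 0).toLinearMap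

lemma filtP_eq_map_pbwMap (d : ℕ) :
    filtP k G V ρ lam 0 0 d
      = (Submodule.map₂ (TensorProduct.mk k (SymmetricAlgebra k V) (MonoidAlgebra k G))
          ((1 ⊔ LinearMap.range (SymmetricAlgebra.ι k V)) ^ d) ⊤).map (pbwMap ρ lam) := by
  have hvec : vecPart ρ lam 0 0 = (LinearMap.range (SymmetricAlgebra.ι k V)).map
      (symLift _ (commute_vecMap ρ lam)).toLinearMap := by
    rw [vecPart, ← LinearMap.range_comp]
    congr 1
    ext v
    simp
  rw [pbwMap, map_mul'_comp_map_map₂_mk, Submodule.map_pow, Submodule.map_sup, Submodule.map_one,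
    ← hvec, ← LinearMap.range_eq_map, filtP_eq, groupPart]

variable (χ : G → Module.Dual k V)

/-- The parameter `λ(g, v) = χ(g, v) g` attached to a function `χ : G → V*`. -/
def scalarParam : G → V →ₗ[k] MonoidAlgebra k G :=
  fun g => (χ g).smulRight (MonoidAlgebra.of k G g)

/-- `χ : G → V*` is a `1`-cocycle for the right action of `G` on `V*` by precomposition. -/
def IsDualCocycle : Prop :=
  ∀ g h, χ (g * h) = χ g ∘ₗ ρ h + χ h

/-- `χ : G → V*` is a `1`-coboundary for the right action of `G` on `V*` by precomposition. -/
def IsDualCoboundary : Prop :=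
  ∃ μ : Module.Dual k V, ∀ g, χ g = μ ∘ₗ ρ g - μ

variable {ρ χ}

namespace IsDualCocycle

lemma map_one (hχ : IsDualCocycle ρ χ) : χ 1 = 0 := by
  simpa [Module.End.one_eq_id] using hχ 1 1

/-- The action of `G` on `S(V)` by affine changes of coordinates `v ↦ ᵍv + χ(g, v)`. -/
def affineAction (hχ : IsDualCocycle ρ χ) : Representation k G (SymmetricAlgebra k V) where
  toFun g := (SymmetricAlgebra.lift
    (SymmetricAlgebra.ι k V ∘ₗ ρ g + Algebra.linearMap k _ ∘ₗ χ g)).toLinearMap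
  map_one' := by
    refine congrArg AlgHom.toLinearMap (a₂ := AlgHom.id k _) (symmetricAlgebra_algHom_ext ?_)
    simp [hχ.map_one]
  map_mul' g h := by
    refine congrArg AlgHom.toLinearMap (a₂ := AlgHom.comp _ _) (symmetricAlgebra_algHom_ext ?_)
    simp [hχ g h, add_assoc]

lemma affineAction_apply (hχ : IsDualCocycle ρ χ) (g : G) (f : SymmetricAlgebra k V) :
    hχ.affineAction g f = SymmetricAlgebra.lift
      (SymmetricAlgebra.ι k V ∘ₗ ρ g + Algebra.linearMap k _ ∘ₗ χ g) f :=
  rfl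

lemma affineAction_one (hχ : IsDualCocycle ρ χ) (g : G) : hχ.affineAction g 1 = 1 := by
  simp [affineAction_apply]

lemma affineAction_ι_mul (hχ : IsDualCocycle ρ χ) (g : G) (v : V) (f : SymmetricAlgebra k V) :
    hχ.affineAction g (SymmetricAlgebra.ι k V v * f)
      = SymmetricAlgebra.ι k V (ρ g v) * hχ.affineAction g f + χ g v • hχ.affineAction g f := by
  simp [affineAction_apply, add_mul, Algebra.smul_def]

/-- The representation of `H_{λ,0}`, where `λ(g, v) = χ(g, v) g`, on `S(V) ⊗ kG`: the algebra
`S(V) ⋊ G` formed with the affine action acts on itself by left multiplication. -/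
def model (hχ : IsDualCocycle ρ χ) :
    HP k G V ρ (scalarParam χ) 0 0 →ₐ[k]
      Module.End k (SymmetricAlgebra k V ⊗[k] MonoidAlgebra k G) :=
  liftHP
    (MonoidAlgebra.lift k _ G <| hχ.affineAction.tprod <|
      (Algebra.lmul k (MonoidAlgebra k G)).toMonoidHom.comp (MonoidAlgebra.of k G))
    (LinearMap.rTensorHom (MonoidAlgebra k G) ∘ₗ LinearMap.mul k _ ∘ₗ SymmetricAlgebra.ι k V)
    (fun g v => by
      refine TensorProduct.ext' fun f a => ?_
      simp [scalarParam, affineAction_ι_mul, TensorProduct.add_tmul, TensorProduct.smul_tmul'])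
    (fun v w => by
      refine TensorProduct.ext' fun f a => ?_
      simp [mul_left_comm])

lemma model_symLift (hχ : IsDualCocycle ρ χ) (f : SymmetricAlgebra k V) :
    hχ.model (symLift _ (commute_vecMap ρ (scalarParam χ)) f)
      = (LinearMap.mulLeft k f).rTensor (MonoidAlgebra k G) := by
  have h : hχ.model.comp (symLift _ (commute_vecMap ρ (scalarParam χ)))
      = (Module.End.rTensorAlgHom k _ _).comp (Algebra.lmul k _) :=
    symmetricAlgebra_algHom_ext fun v => by
      rw [AlgHom.comp_apply, symLift_ι, model, liftHP_vecMap]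
      rfl
  exact DFunLike.congr_fun h f

lemma model_groupHom_apply_one (hχ : IsDualCocycle ρ χ) (a : MonoidAlgebra k G) :
    hχ.model (groupHom ρ (scalarParam χ) 0 0 a) (1 ⊗ₜ 1) = 1 ⊗ₜ a := by
  induction a using MonoidAlgebra.induction_on with
  | of g => simp [model, affineAction_one]
  | add a b ha hb => simp only [map_add, LinearMap.add_apply, ha, hb, TensorProduct.tmul_add]
  | smul r a ha => simp only [map_smul, LinearMap.smul_apply, ha, TensorProduct.tmul_smul]

lemma pbwMap_injective (hχ : IsDualCocycle ρ χ) :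
    Function.Injective (pbwMap ρ (scalarParam χ)) := by
  refine Function.LeftInverse.injective (g := fun x => hχ.model x (1 ⊗ₜ 1)) fun t => ?_
  induction t using TensorProduct.induction_on with
  | zero => simp
  | tmul f a => simp [pbwMap, model_symLift, model_groupHom_apply_one]
  | add s t hs ht => simpa only [map_add, LinearMap.add_apply] using congrArg₂ (· + ·) hs ht

lemma isPBWP (hχ : IsDualCocycle ρ χ) : IsPBWP k G V ρ (scalarParam χ) 0 0 := by
  have hrank : ∀ {χ : G → Module.Dual k V}, IsDualCocycle ρ χ → ∀ d,
      Module.finrank k (filtP k G V ρ (scalarParam χ) 0 0 d)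
        = Module.finrank k (Submodule.map₂
          (TensorProduct.mk k (SymmetricAlgebra k V) (MonoidAlgebra k G))
          ((1 ⊔ LinearMap.range (SymmetricAlgebra.ι k V)) ^ d) ⊤) := fun h d => by
    rw [filtP_eq_map_pbwMap]
    exact (Submodule.equivMapOfInjective _ h.pbwMap_injective _).finrank_eq.symm
  have hzero : IsDualCocycle ρ (0 : G → Module.Dual k V) := fun g h => by simp
  have hparam : scalarParam (0 : G → Module.Dual k V) = 0 := by
    ext g v
    simp [scalarParam]
  intro d
  rw [hrank hχ, ← hrank hzero, hparam]

end IsDualCocycle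

end PBW

section DegreeOne

/-- The normal form `(c, v) ⊗ a ↦ (c + v)·a` of the elements of degree at most one. -/
def degreeOneMap : (k × V) ⊗[k] MonoidAlgebra k G →ₗ[k] HP k G V ρ lam κC κL :=
  LinearMap.mul' k _ ∘ₗ TensorProduct.map
    (LinearMap.coprod (Algebra.linearMap k _) (vecMap ρ lam κC κL))
    (groupHom ρ lam κC κL).toLinearMap

lemma range_degreeOneMap :
    LinearMap.range (degreeOneMap ρ lam κC κL) = filtP k G V ρ lam κC κL 1 := by
  rw [degreeOneMap, range_mul'_comp_map, LinearMap.range_coprod, ← Submodule.one_eq_range, filtP_eq,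
    pow_one, vecPart, groupPart]

variable {ρ lam κC κL}

lemma degreeOneMap_tmul (x : k × V) (a : MonoidAlgebra k G) :
    degreeOneMap ρ lam κC κL (x ⊗ₜ a)
      = (algebraMap k _ x.1 + vecMap ρ lam κC κL x.2) * groupHom ρ lam κC κL a := by
  simp [degreeOneMap]

lemma groupHom_mem_filtP_zero (a : MonoidAlgebra k G) :
    groupHom ρ lam κC κL a ∈ filtP k G V ρ lam κC κL 0 := by
  rw [filtP_zero]
  exact ⟨a, rfl⟩

lemma groupHom_mem_filtP_one (a : MonoidAlgebra k G) :
    groupHom ρ lam κC κL a ∈ filtP k G V ρ lam κC κL 1 := by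
  rw [← range_degreeOneMap]
  exact ⟨(1, 0) ⊗ₜ a, by simp [degreeOneMap_tmul]⟩

lemma vecMap_mem_filtP_one (v : V) : vecMap ρ lam κC κL v ∈ filtP k G V ρ lam κC κL 1 := by
  rw [← range_degreeOneMap]
  exact ⟨(0, v) ⊗ₜ 1, by simp [degreeOneMap_tmul]⟩

lemma groupHom_of_mul_degreeOneMap_tmul (g : G) (x : k × V) (a : MonoidAlgebra k G) :
    groupHom ρ 0 κC κL (MonoidAlgebra.of k G g) * degreeOneMap ρ 0 κC κL (x ⊗ₜ a)
      = degreeOneMap ρ 0 κC κL ((x.1, ρ g x.2) ⊗ₜ (MonoidAlgebra.of k G g * a)) := by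
  rw [degreeOneMap_tmul, degreeOneMap_tmul, ← mul_assoc, mul_add, ← Algebra.commutes,
    groupHom_of_mul_vecMap, Pi.zero_apply, LinearMap.zero_apply, map_zero, add_zero, ← add_mul,
    map_mul, mul_assoc]

lemma degreeOneMap_tmul_mul_groupHom (x : k × V) (a b : MonoidAlgebra k G) :
    degreeOneMap ρ lam κC κL (x ⊗ₜ a) * groupHom ρ lam κC κL b
      = degreeOneMap ρ lam κC κL (x ⊗ₜ (a * b)) := by
  rw [degreeOneMap_tmul, degreeOneMap_tmul, map_mul, mul_assoc]

lemma IsDualCocycle.degreeOneMap_injective {χ : G → Module.Dual k V} (hχ : IsDualCocycle ρ χ) :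
    Function.Injective (degreeOneMap ρ (scalarParam χ) 0 0) := by
  have hfac : degreeOneMap ρ (scalarParam χ) 0 0
      = pbwMap ρ (scalarParam χ) ∘ₗ (symLinear k V).rTensor (MonoidAlgebra k G) := by
    refine TensorProduct.ext' fun x a => ?_
    simp [degreeOneMap, pbwMap, symLinear]
  rw [hfac]
  exact hχ.pbwMap_injective.comp
    (Module.Flat.rTensor_preserves_injective_linearMap _ symLinear_injective)

lemma degreeOneMap_injective_of_map_filtP_one [Finite G] [FiniteDimensional k V]
    {lam' : G → V →ₗ[k] MonoidAlgebra k G} {κC' : V →ₗ[k] V →ₗ[k] MonoidAlgebra k G}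
    {κL' : V →ₗ[k] V →ₗ[k] V ⊗[k] MonoidAlgebra k G}
    (hinj : Function.Injective (degreeOneMap ρ lam κC κL))
    (e : HP k G V ρ lam κC κL ≃ₐ[k] HP k G V ρ lam' κC' κL')
    (he : (filtP k G V ρ lam κC κL 1).map e.toLinearMap = filtP k G V ρ lam' κC' κL' 1) :
    Function.Injective (degreeOneMap ρ lam' κC' κL') := by
  have : FiniteDimensional k (MonoidAlgebra k G) := .of_basis (MonoidAlgebra.basis G k)
  refine injective_of_range_le_range (T := e.toLinearMap ∘ₗ degreeOneMap ρ lam κC κL)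
    (e.injective.comp hinj) ?_
  rw [LinearMap.range_comp, range_degreeOneMap, range_degreeOneMap, he]

end DegreeOne

section FilteredCharacter

variable {ρ lam κC κL}

/-- A linear functional on `H_{λ,κ}` which, on the elements of degree at most one, turns left and
right multiplication by elements of degree zero into multiplication in `k`. -/
structure IsFilteredCharacter (δ : HP k G V ρ lam κC κL →ₗ[k] k) : Prop where
  map_one : δ 1 = 1
  map_mul_left : ∀ x ∈ filtP k G V ρ lam κC κL 0, ∀ y ∈ filtP k G V ρ lam κC κL 1,
    δ (x * y) = δ x * δ y
  map_mul_right : ∀ x ∈ filtP k G V ρ lam κC κL 0, ∀ y ∈ filtP k G V ρ lam κC κL 1,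
    δ (y * x) = δ y * δ x

lemma exists_isFilteredCharacter (hinj : Function.Injective (degreeOneMap ρ 0 κC κL)) :
    ∃ δ : HP k G V ρ 0 κC κL →ₗ[k] k, IsFilteredCharacter δ := by
  let ε : MonoidAlgebra k G →ₐ[k] k := MonoidAlgebra.lift k k G 1
  obtain ⟨l, hl⟩ := LinearMap.exists_leftInverse_of_injective _ (LinearMap.ker_eq_bot.2 hinj)
  let δ := LinearMap.mul' k k ∘ₗ TensorProduct.map (LinearMap.fst k k V) ε.toLinearMap ∘ₗ l
  have hδ : ∀ x a, δ (degreeOneMap ρ 0 κC κL (x ⊗ₜ a)) = x.1 * ε a := fun x a => by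
    have h : l (degreeOneMap ρ 0 κC κL (x ⊗ₜ a)) = x ⊗ₜ a := DFunLike.congr_fun hl _
    simp [δ, h]
  have hδgrp : ∀ a, δ (groupHom ρ 0 κC κL a) = ε a := fun a => by
    simpa [degreeOneMap_tmul] using hδ (1, 0) a
  have hleft : ∀ b t, δ (groupHom ρ 0 κC κL b * degreeOneMap ρ 0 κC κL t)
      = ε b * δ (degreeOneMap ρ 0 κC κL t) := fun b t => by
    induction t using TensorProduct.induction_on with
    | zero => simp
    | add s t hs ht => simp only [map_add, mul_add, hs, ht]
    | tmul x a =>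
      induction b using MonoidAlgebra.induction_on with
      | of g => rw [groupHom_of_mul_degreeOneMap_tmul, hδ, hδ, map_mul, mul_left_comm]
      | add b c hb hc => simp only [map_add, add_mul, hb, hc]
      | smul r b hb => simp only [map_smul, smul_mul_assoc, hb]
  have hright : ∀ b t, δ (degreeOneMap ρ 0 κC κL t * groupHom ρ 0 κC κL b)
      = δ (degreeOneMap ρ 0 κC κL t) * ε b := fun b t => by
    induction t using TensorProduct.induction_on with
    | zero => simp
    | add s t hs ht => simp only [map_add, add_mul, hs, ht]
    | tmul x a => rw [degreeOneMap_tmul_mul_groupHom, hδ, hδ, map_mul, mul_assoc]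
  refine ⟨δ, by rw [← map_one (groupHom ρ 0 κC κL), hδgrp, map_one], ?_, ?_⟩ <;>
    rw [filtP_zero, ← range_degreeOneMap] <;> rintro _ ⟨b, rfl⟩ _ ⟨t, rfl⟩
  · rw [AlgHom.toLinearMap_apply, hδgrp, hleft]
  · rw [AlgHom.toLinearMap_apply, hδgrp, hright]

namespace IsFilteredCharacter

lemma comp_algEquiv {lam' : G → V →ₗ[k] MonoidAlgebra k G} {κC' : V →ₗ[k] V →ₗ[k] MonoidAlgebra k G}
    {κL' : V →ₗ[k] V →ₗ[k] V ⊗[k] MonoidAlgebra k G} {δ : HP k G V ρ lam' κC' κL' →ₗ[k] k}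
    (hδ : IsFilteredCharacter δ)
    (e : HP k G V ρ lam κC κL ≃ₐ[k] HP k G V ρ lam' κC' κL')
    (he : ∀ d, (filtP k G V ρ lam κC κL d).map e.toLinearMap ≤ filtP k G V ρ lam' κC' κL' d) :
    IsFilteredCharacter (δ ∘ₗ e.toLinearMap) where
  map_one := by simp [hδ.map_one]
  map_mul_left x hx y hy := by
    simpa using hδ.map_mul_left _ (he 0 ⟨x, hx, rfl⟩) _ (he 1 ⟨y, hy, rfl⟩)
  map_mul_right x hx y hy := by
    simpa using hδ.map_mul_right _ (he 0 ⟨x, hx, rfl⟩) _ (he 1 ⟨y, hy, rfl⟩)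

lemma apply_groupHom_of_ne_zero {δ : HP k G V ρ lam κC κL →ₗ[k] k}
    (hδ : IsFilteredCharacter δ) (g : G) :
    δ (groupHom ρ lam κC κL (MonoidAlgebra.of k G g)) ≠ 0 := by
  refine left_ne_zero_of_mul_eq_one
    (b := δ (groupHom ρ lam κC κL (MonoidAlgebra.of k G g⁻¹))) ?_
  rw [← hδ.map_mul_left _ (groupHom_mem_filtP_zero _) _ (groupHom_mem_filtP_one _), ← map_mul,
    ← map_mul, mul_inv_cancel, (MonoidAlgebra.of k G).map_one, _root_.map_one, hδ.map_one]

lemma isDualCoboundary {χ : G → Module.Dual k V} {δ : HP k G V ρ (scalarParam χ) κC κL →ₗ[k] k}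
    (hδ : IsFilteredCharacter δ) : IsDualCoboundary ρ χ := by
  refine ⟨-(δ ∘ₗ vecMap ρ (scalarParam χ) κC κL), fun g => LinearMap.ext fun v => ?_⟩
  have hrel := congrArg δ (groupHom_of_mul_vecMap ρ (scalarParam χ) κC κL g v)
  rw [scalarParam, LinearMap.smulRight_apply, map_smul, map_add, map_smul, smul_eq_mul,
    hδ.map_mul_left _ (groupHom_mem_filtP_zero _) _ (vecMap_mem_filtP_one _),
    hδ.map_mul_right _ (groupHom_mem_filtP_zero _) _ (vecMap_mem_filtP_one _),
    mul_comm, ← add_mul] at hrel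
  have hcancel := mul_right_cancel₀ (hδ.apply_groupHom_of_ne_zero g) hrel
  simp [hcancel]

end IsFilteredCharacter

end FilteredCharacter

end Presentation

section Example

variable (k : Type) [Field k] (p : ℕ) [CharP k p]

/-- The function `χ` on `G = ⟨g⟩` with `χ(gⁱ, v) = i` and `χ(gⁱ, w) = i(i - 1)/2`. -/
def binomialCocycle (x : Multiplicative (ZMod p)) : Module.Dual k (Fin 2 → k) :=
  cf k p x • LinearMap.proj 0 + (cf k p x * (cf k p x - 1) / 2) • LinearMap.proj 1

lemma binomialCocycle_apply (x : Multiplicative (ZMod p)) (f : Fin 2 → k) :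
    binomialCocycle k p x f = cf k p x * f 0 + cf k p x * (cf k p x - 1) / 2 * f 1 :=
  rfl

variable [Fact p.Prime]

lemma ρ2_apply (x : Multiplicative (ZMod p)) (f : Fin 2 → k) :
    ρ2 k p x f = f + cf k p x • Pi.single 0 (f 1) :=
  rfl

lemma scalarParam_binomialCocycle : scalarParam (binomialCocycle k p) = lam8 k p := by
  refine funext fun x => LinearMap.ext fun f => ?_
  simp [scalarParam, binomialCocycle_apply, lam8, mul_comm]

lemma isDualCocycle_binomialCocycle (hp : 2 < p) :
    IsDualCocycle (ρ2 k p) (binomialCocycle k p) := by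
  have h2 : (2 : k) ≠ 0 := Ring.two_ne_zero (ringChar.eq k p ▸ hp.ne')
  intro x y
  refine LinearMap.ext fun f => ?_
  simp only [LinearMap.add_apply, LinearMap.comp_apply, binomialCocycle_apply, ρ2_apply, cf_mul,
    Pi.add_apply, Pi.smul_apply, smul_eq_mul, Pi.single_eq_same, Pi.single_eq_of_ne one_ne_zero]
  field_simp
  ring

lemma not_isDualCoboundary_binomialCocycle :
    ¬ IsDualCoboundary (ρ2 k p) (binomialCocycle k p) := by
  rintro ⟨μ, hμ⟩
  have hfix : ρ2 k p (gg p) (Pi.single 0 1) = Pi.single 0 1 := by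
    simp [ρ2_apply]
  have hone : binomialCocycle k p (gg p) (Pi.single 0 1) = 1 := by
    simp [binomialCocycle_apply, cf, gg]
  rw [hμ, LinearMap.sub_apply, LinearMap.comp_apply, hfix, sub_self] at hone
  exact zero_ne_one hone

end Example

end DeformKoszul

theorem modular_deformation_cannot_be_untwisted_general {k G V : Type} [Field k] [Group G]
    [Finite G] [AddCommGroup V] [Module k V] [FiniteDimensional k V] (ρ : Representation k G V)
    {χ : G → Module.Dual k V} (hχ : IsDualCocycle ρ χ) (hχ' : ¬ IsDualCoboundary ρ χ) :
    IsPBWP k G V ρ (scalarParam χ) 0 0 ∧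
    ¬ ∃ (κC' : V →ₗ[k] V →ₗ[k] MonoidAlgebra k G) (κL' : V →ₗ[k] V →ₗ[k] V ⊗[k] MonoidAlgebra k G)
        (e : HP k G V ρ (scalarParam χ) 0 0 ≃ₐ[k] HP k G V ρ 0 κC' κL'),
        ∀ d, (filtP k G V ρ (scalarParam χ) 0 0 d).map e.toLinearMap
          = filtP k G V ρ 0 κC' κL' d := by
  refine ⟨hχ.isPBWP, fun ⟨κC', κL', e, he⟩ => hχ' ?_⟩
  have hinj : Function.Injective (degreeOneMap ρ 0 κC' κL') :=
    degreeOneMap_injective_of_map_filtP_one hχ.degreeOneMap_injective e (he 1)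
  obtain ⟨δ, hδ⟩ := exists_isFilteredCharacter hinj
  exact (hδ.comp_algEquiv e fun d => (he d).le).isDualCoboundary

/-- **Example 5.3 and Remark 6.2** of Shepler–Witherspoon, "Deforming group actions on
Koszul algebras": in characteristic `p > 2`, for the cyclic group `G = ⟨g⟩` of order
`p` acting on `V = kv ⊕ kw` by `ᵍv = v`, `ᵍw = v + w`, and the parameters
`λ(gⁱ, v) = i gⁱ`, `λ(1,w) = λ(g,w) = 0`, `λ(gⁱ,w) = (i choose 2) gⁱ`:
the algebra `H_{λ,0}` is a PBW deformation of `S(V) ⋊ G`, but there is **no** bilinear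
parameter `κ' = κ'^C + κ'^L : V × V → kG ⊕ (V ⊗ kG)` with `H_{λ,0} ≅ H_{0,κ'}` as
filtered algebras.  Hence the nonmodular untwisting theorem fails in the modular
setting. -/
theorem modular_deformation_cannot_be_untwisted
    (k : Type) [Field k] (p : ℕ) [Fact p.Prime] (hp : 2 < p) [CharP k p] :
    IsPBWP k (Multiplicative (ZMod p)) (Fin 2 → k) (ρ2 k p) (lam8 k p) 0 0 ∧
    ¬ ∃ (κC' : (Fin 2 → k) →ₗ[k] (Fin 2 → k) →ₗ[k] MonoidAlgebra k (Multiplicative (ZMod p)))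
        (κL' : (Fin 2 → k) →ₗ[k] (Fin 2 → k) →ₗ[k]
          ((Fin 2 → k) ⊗[k] MonoidAlgebra k (Multiplicative (ZMod p))))
        (e : HP k (Multiplicative (ZMod p)) (Fin 2 → k) (ρ2 k p) (lam8 k p) 0 0 ≃ₐ[k]
          HP k (Multiplicative (ZMod p)) (Fin 2 → k) (ρ2 k p) 0 κC' κL'),
        ∀ d, Submodule.map (e.toLinearEquiv : _ →ₗ[k] _)
            (filtP k (Multiplicative (ZMod p)) (Fin 2 → k) (ρ2 k p) (lam8 k p) 0 0 d)
          = filtP k (Multiplicative (ZMod p)) (Fin 2 → k) (ρ2 k p) 0 κC' κL' d := by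
  rw [← scalarParam_binomialCocycle]
  exact modular_deformation_cannot_be_untwisted_general (ρ2 k p)
    (isDualCocycle_binomialCocycle k p hp) (not_isDualCoboundary_binomialCocycle k p)
end
end

section
/- Let G be a finite group acting linearly on a finite dimensional k-vector space V, let S = T_k(V)/(R) with R ⊆ V⊗V a subspace closed under the action of G, and let G act on S by the induced graded automorphisms. Then the skew group algebra S⋊G is isomorphic, as a graded algebra, to T_{kG}(kG⊗V⊗kG)/(R ∪ R'), where elements of G have degree 0 and elements of V have degree 1, R' = span_k{ g⊗v⊗1 − 1⊗ᵍv⊗g : v ∈ V, g ∈ G } ⊆ kG⊗V⊗kG, and R is identified with a subspace of k⊗V⊗k⊗V⊗k ⊆ (kG⊗V⊗kG)⊗_{kG}(kG⊗V⊗kG). -/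
open TensorProduct

noncomputable section

namespace DeformKoszul

variable (k G V : Type) [Field k] [Group G] [AddCommGroup V] [Module k V]

/-! ### Koszulity (Backelin's distributivity criterion) -/

/-- `Vpow n = V^{⊗(n+1)}`. -/
def Vpow : ℕ → ModuleCat k
  | 0 => ModuleCat.of k V
  | n+1 => ModuleCat.of k (V ⊗[k] (Vpow n))

variable (R : Submodule k (V ⊗[k] V))

/-- `Wsub m i` is the subspace `V^{⊗i} ⊗ R ⊗ V^{⊗(m-1-i)}` of `V^{⊗(m+1)}`
(junk value `⊥` for `i > m-1`). -/
def Wsub : (m : ℕ) → ℕ → Submodule k (Vpow k V m)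
  | 0, _ => ⊥
  | 1, 0 => R
  | 1, _+1 => ⊥
  | m+2, 0 =>
      Submodule.map (TensorProduct.assoc k V V (Vpow k V m)).toLinearMap
        (LinearMap.range (TensorProduct.map R.subtype (LinearMap.id (M := Vpow k V m))))
  | m+1, i+1 =>
      LinearMap.range (TensorProduct.map (LinearMap.id (M := V)) (Wsub m i).subtype)

/-- The quadratic algebra `S = T(V)/(R)` is **Koszul**.  We use Backelin's criterion:
`S` is Koszul iff for each `n` the subspaces `V^{⊗i} ⊗ R ⊗ V^{⊗j}` of `V^{⊗n}`
generate a distributive lattice; for finite collections of subspaces of a vector space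
distributivity is equivalent to the existence of a basis of `V^{⊗n}` from which each of
the subspaces can be spanned. -/
def IsKoszul : Prop :=
  ∀ m : ℕ, ∃ (ι : Type) (b : Module.Basis ι k (Vpow k V m)),
    ∀ i : ℕ, ∃ J : Set ι, Wsub k V R m i = Submodule.span k (⇑b '' J)

/-- `V ⊗ V → FreeAlg`, `v ⊗ w ↦ v·w`. -/
def mulVV : V ⊗[k] V →ₗ[k] FreeAlg k G V :=
  (LinearMap.mul' k _).comp (TensorProduct.map (vIn k G V) (vIn k G V))

variable (ρ : Representation k G V)

/-- The defining relations of `H_{λ,α,β}` over the generating space `kG ⊕ V`: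
`kG` is a subalgebra (with the same unit), the group-action relations
`g·v = (ᵍv)·g + λ(g ⊗ v)` deforming `R'` by `λ`, and the quadratic Koszul relations
`r = α(r) + β(r)` for `r ∈ R`. -/
inductive GRel (lam : MonoidAlgebra k G ⊗[k] V →ₗ[k] MonoidAlgebra k G)
    (α : R →ₗ[k] (V ⊗[k] MonoidAlgebra k G))
    (β : R →ₗ[k] MonoidAlgebra k G) :
    FreeAlg k G V → FreeAlg k G V → Prop
  | unit : GRel lam α β (gIn k G V 1) 1
  | gmul (x y : MonoidAlgebra k G) :
      GRel lam α β (gIn k G V x * gIn k G V y) (gIn k G V (x * y))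
  | act (g : G) (v : V) :
      GRel lam α β (gIn k G V (MonoidAlgebra.of k G g) * vIn k G V v)
        (vIn k G V (ρ g v) * gIn k G V (MonoidAlgebra.of k G g)
          + gIn k G V (lam (MonoidAlgebra.of k G g ⊗ₜ[k] v)))
  | quad (r : R) :
      GRel lam α β (mulVV k G V (r : V ⊗[k] V))
        (embVG k G V (α r) + gIn k G V (β r))

variable (lam : MonoidAlgebra k G ⊗[k] V →ₗ[k] MonoidAlgebra k G)
    (α : R →ₗ[k] (V ⊗[k] MonoidAlgebra k G))
    (β : R →ₗ[k] MonoidAlgebra k G)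

/-- The algebra `H_{λ,α,β}`.  For `lam = 0`, `α = 0`, `β = 0` this is (the presentation
of) the skew group algebra `S ⋊ G`, where `S = T(V)/(R)`. -/
abbrev HAlg := RingQuot (GRel k G V R ρ lam α β)

/-- The quotient map onto `H_{λ,α,β}`. -/
def toH : FreeAlg k G V →ₐ[k] HAlg k G V R ρ lam α β :=
  RingQuot.mkAlgHom k (GRel k G V R ρ lam α β)

/-- The induced filtration on `H_{λ,α,β}`. -/
def filtH (d : ℕ) : Submodule k (HAlg k G V R ρ lam α β) :=
  (filtT k G V d).map (toH k G V R ρ lam α β).toLinearMap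

/-- `H_{λ,α,β}` is a **PBW deformation** of `S ⋊ G`:  the associated graded algebra is
`S ⋊ G`, equivalently (all filtered pieces being finite dimensional) each filtered
piece has the same dimension as the corresponding one of `S ⋊ G = H_{0,0,0}`. -/
def IsPBW : Prop :=
  ∀ d, Module.finrank k (filtH k G V R ρ lam α β d)
    = Module.finrank k (filtH k G V R ρ 0 0 0 d)

/-! ### The skew group algebra and auxiliary maps -/

/-- The skew group algebra `S ⋊ G`, presented as `H_{0,0,0}`. -/
abbrev SkewA := HAlg k G V R ρ 0 0 0

/-- The image of `kG` in `S ⋊ G`. -/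
def gA : MonoidAlgebra k G →ₗ[k] SkewA k G V R ρ :=
  (toH k G V R ρ 0 0 0).toLinearMap.comp (gIn k G V)

/-- The image of `V` in `S ⋊ G`. -/
def vA : V →ₗ[k] SkewA k G V R ρ :=
  (toH k G V R ρ 0 0 0).toLinearMap.comp (vIn k G V)

/-- `g`, as an element of the group algebra. -/
def ofg (g : G) : MonoidAlgebra k G := MonoidAlgebra.of k G g

/-- The twist map `σ : kG ⊗ V → V ⊗ kG`, `g ⊗ v ↦ ᵍv ⊗ g`. -/
def sigma : MonoidAlgebra k G ⊗[k] V →ₗ[k] V ⊗[k] MonoidAlgebra k G :=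
  TensorProduct.lift
    (((Finsupp.lift (V →ₗ[k] (V ⊗[k] MonoidAlgebra k G)) k G
      (fun g => ((TensorProduct.mk k V (MonoidAlgebra k G)).flip (MonoidAlgebra.of k G g)).comp
        (ρ g))).comp (MonoidAlgebra.coeffLinearEquiv k).toLinearMap :
      MonoidAlgebra k G →ₗ[k] (V →ₗ[k] (V ⊗[k] MonoidAlgebra k G))))

/-- `λ(g ⊗ -) : V → kG` for fixed `g`. -/
def lamMk (g : G) : V →ₗ[k] MonoidAlgebra k G :=
  lam.comp ((TensorProduct.mk k (MonoidAlgebra k G) V) (MonoidAlgebra.of k G g))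

variable (hR : ∀ (g : G) (x : V ⊗[k] V), x ∈ R → TensorProduct.map (ρ g) (ρ g) x ∈ R)

/-- The diagonal action of `g` on `R ⊆ V ⊗ V`. -/
def rActR (g : G) : R →ₗ[k] R :=
  (TensorProduct.map (ρ g) (ρ g)).restrict (fun x hx => hR g x hx)

/-- Multiplication `V ⊗ kG → S ⋊ G`. -/
def embVGA : V ⊗[k] MonoidAlgebra k G →ₗ[k] SkewA k G V R ρ :=
  (LinearMap.mul' k _).comp (TensorProduct.map (vA k G V R ρ) (gA k G V R ρ))

/-- Multiplication `kG ⊗ V → S ⋊ G`. -/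
def embGVA : MonoidAlgebra k G ⊗[k] V →ₗ[k] SkewA k G V R ρ :=
  (LinearMap.mul' k _).comp (TensorProduct.map (gA k G V R ρ) (vA k G V R ρ))

/-- Multiplication `(V ⊗ kG) ⊗ V → S ⋊ G`. -/
def embVGVA : (V ⊗[k] MonoidAlgebra k G) ⊗[k] V →ₗ[k] SkewA k G V R ρ :=
  (LinearMap.mul' k _).comp (TensorProduct.map (embVGA k G V R ρ) (vA k G V R ρ))

/-- Multiplication `V ⊗ (V ⊗ kG) → S ⋊ G`. -/
def embVVGA : V ⊗[k] (V ⊗[k] MonoidAlgebra k G) →ₗ[k] SkewA k G V R ρ :=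
  (LinearMap.mul' k _).comp (TensorProduct.map (vA k G V R ρ) (embVGA k G V R ρ))

/-- The inclusion `R ⊗ V → V ⊗ (V ⊗ V)`. -/
def inclRV : (R : Submodule k (V ⊗[k] V)) ⊗[k] V →ₗ[k] V ⊗[k] (V ⊗[k] V) :=
  (TensorProduct.assoc k V V V).toLinearMap.comp
    (TensorProduct.map R.subtype LinearMap.id)

/-- The inclusion `V ⊗ R → V ⊗ (V ⊗ V)`. -/
def inclVR : V ⊗[k] (R : Submodule k (V ⊗[k] V)) →ₗ[k] V ⊗[k] (V ⊗[k] V) :=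
  TensorProduct.map LinearMap.id R.subtype

/-- The inclusion `R ⊗ kG → V ⊗ (V ⊗ kG)`. -/
def inclRG : (R : Submodule k (V ⊗[k] V)) ⊗[k] MonoidAlgebra k G →ₗ[k]
    V ⊗[k] (V ⊗[k] MonoidAlgebra k G) :=
  (TensorProduct.assoc k V V (MonoidAlgebra k G)).toLinearMap.comp
    (TensorProduct.map R.subtype LinearMap.id)

/-- `((1 ⊗ σ)(α ⊗ 1) − 1 ⊗ α)(x)`, computed from the two presentations
`x₁ ∈ R ⊗ V` and `x₂ ∈ V ⊗ R` of an element `x ∈ (R ⊗ V) ∩ (V ⊗ R)`. -/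
def Theta (x₁ : (R : Submodule k (V ⊗[k] V)) ⊗[k] V)
    (x₂ : V ⊗[k] (R : Submodule k (V ⊗[k] V))) : V ⊗[k] (V ⊗[k] MonoidAlgebra k G) :=
  (TensorProduct.map LinearMap.id (sigma k G V ρ))
      ((TensorProduct.assoc k V (MonoidAlgebra k G) V)
        ((TensorProduct.map α LinearMap.id) x₁))
    - (TensorProduct.map LinearMap.id α) x₂

/-- The extension of `α` to a right `kG`-module map `R ⊗ kG → V ⊗ kG`. -/
def αext : (R : Submodule k (V ⊗[k] V)) ⊗[k] MonoidAlgebra k G →ₗ[k]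
    V ⊗[k] MonoidAlgebra k G :=
  (TensorProduct.map LinearMap.id (LinearMap.mul' k (MonoidAlgebra k G))).comp
    (((TensorProduct.assoc k V (MonoidAlgebra k G) (MonoidAlgebra k G)).toLinearMap).comp
      (TensorProduct.map α LinearMap.id))

/-- The extension of `β` to a right `kG`-module map `R ⊗ kG → kG`. -/
def βext : (R : Submodule k (V ⊗[k] V)) ⊗[k] MonoidAlgebra k G →ₗ[k] MonoidAlgebra k G :=
  (LinearMap.mul' k (MonoidAlgebra k G)).comp (TensorProduct.map β LinearMap.id)

/-- The `g`-component `α_g : R → V` of `α`. -/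
def αComp (g : G) : (R : Submodule k (V ⊗[k] V)) →ₗ[k] V :=
  ((TensorProduct.rid k V).toLinearMap.comp
    (TensorProduct.map LinearMap.id
      ((Finsupp.lapply g).comp (MonoidAlgebra.coeffLinearEquiv k).toLinearMap))).comp α

/-- `Σ_{g ∈ G} α_g ⊗ λ(g ⊗ −)`, as a map `R ⊗ V → S ⋊ G`. -/
def sumAlphaLam [Fintype G] : (R : Submodule k (V ⊗[k] V)) ⊗[k] V →ₗ[k] SkewA k G V R ρ :=
  ∑ g : G, (embVGA k G V R ρ).comp
    (TensorProduct.map (αComp k G V R α g) (lamMk k G V lam g))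

/-- The degree-`d` graded piece of `S ⋊ G = H_{0,0,0}`. -/
def grA (d : ℕ) : Submodule k (SkewA k G V R ρ) :=
  (grT k G V d).map (toH k G V R ρ 0 0 0).toLinearMap

/-! ### The presentation `T_{kG}(kG ⊗ V ⊗ kG)/(R ∪ R')` -/

/-- The `kG`-bimodule `kG ⊗ V ⊗ kG`. -/
abbrev MM := MonoidAlgebra k G ⊗[k] (V ⊗[k] MonoidAlgebra k G)

/-- The free `k`-algebra on `kG ⊕ (kG ⊗ V ⊗ kG)`; quotiented by the relations
`TRel` below (which make `kG` a subalgebra acting on both sides of `kG ⊗ V ⊗ kG` in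
the evident way) it realizes the tensor algebra `T_{kG}(kG ⊗ V ⊗ kG)` of the
`kG`-bimodule `kG ⊗ V ⊗ kG` over the (noncommutative) ring `kG`, together with the
further relations `R ∪ R'`. -/
abbrev Free2 := TensorAlgebra k (MonoidAlgebra k G × MM k G V)

/-- The embedding of `kG`. -/
def gIn2 : MonoidAlgebra k G →ₗ[k] Free2 k G V :=
  (TensorAlgebra.ι k).comp (LinearMap.inl k (MonoidAlgebra k G) (MM k G V))

/-- The embedding of `kG ⊗ V ⊗ kG`. -/
def mIn2 : MM k G V →ₗ[k] Free2 k G V :=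
  (TensorAlgebra.ι k).comp (LinearMap.inr k (MonoidAlgebra k G) (MM k G V))

/-- `V → kG ⊗ V ⊗ kG`, `v ↦ 1 ⊗ v ⊗ 1`. -/
def jV : V →ₗ[k] MM k G V :=
  ((TensorProduct.mk k (MonoidAlgebra k G) (V ⊗[k] MonoidAlgebra k G)) 1).comp
    ((TensorProduct.mk k V (MonoidAlgebra k G)).flip 1)

/-- `V ⊗ V → Free2`, `v ⊗ w ↦ (1⊗v⊗1)·(1⊗w⊗1)`; this is how `R` is identified with a
subspace of `(kG ⊗ V ⊗ kG) ⊗_{kG} (kG ⊗ V ⊗ kG)`. -/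
def mul2VV : V ⊗[k] V →ₗ[k] Free2 k G V :=
  (LinearMap.mul' k _).comp
    (TensorProduct.map ((mIn2 k G V).comp (jV k G V)) ((mIn2 k G V).comp (jV k G V)))

/-- The left action of `kG` on `kG ⊗ V ⊗ kG`. -/
def lactM (x : MonoidAlgebra k G) : MM k G V →ₗ[k] MM k G V :=
  TensorProduct.map (LinearMap.mulLeft k x) LinearMap.id

/-- The right action of `kG` on `kG ⊗ V ⊗ kG`. -/
def ractM (x : MonoidAlgebra k G) : MM k G V →ₗ[k] MM k G V :=
  TensorProduct.map LinearMap.id (TensorProduct.map LinearMap.id (LinearMap.mulRight k x))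

/-- Relations presenting `T_{kG}(kG ⊗ V ⊗ kG)/(R ∪ R')` as a quotient of the free
`k`-algebra on `kG ⊕ (kG ⊗ V ⊗ kG)`:  the first four families of relations present the
relative tensor algebra `T_{kG}(kG ⊗ V ⊗ kG)` over the ring `kG`, `quad` imposes `R`
and `skew` imposes `R' = span{g ⊗ v ⊗ 1 − 1 ⊗ ᵍv ⊗ g}`. -/
inductive TRel : Free2 k G V → Free2 k G V → Prop
  | unit : TRel (gIn2 k G V 1) 1
  | gmul (x y : MonoidAlgebra k G) :
      TRel (gIn2 k G V x * gIn2 k G V y) (gIn2 k G V (x * y))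
  | lact (x : MonoidAlgebra k G) (m : MM k G V) :
      TRel (gIn2 k G V x * mIn2 k G V m) (mIn2 k G V (lactM k G V x m))
  | ract (x : MonoidAlgebra k G) (m : MM k G V) :
      TRel (mIn2 k G V m * gIn2 k G V x) (mIn2 k G V (ractM k G V x m))
  | quad (r : R) : TRel (mul2VV k G V (r : V ⊗[k] V)) 0
  | skew (g : G) (v : V) :
      TRel (mIn2 k G V (MonoidAlgebra.of k G g ⊗ₜ[k] (v ⊗ₜ[k] 1)))
        (mIn2 k G V (1 ⊗ₜ[k] (ρ g v ⊗ₜ[k] MonoidAlgebra.of k G g)))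

/-- The algebra `T_{kG}(kG ⊗ V ⊗ kG)/(R ∪ R')`. -/
abbrev QT := RingQuot (TRel k G V R ρ)

/-- The quotient map. -/
def toQT : Free2 k G V →ₐ[k] QT k G V R ρ :=
  RingQuot.mkAlgHom k (TRel k G V R ρ)

/-- Degree-`n` part of `Free2`: `kG` has degree 0 and `kG ⊗ V ⊗ kG` degree 1. -/
def grT2 : ℕ → Submodule k (Free2 k G V)
  | 0 => Subalgebra.toSubmodule (Algebra.adjoin k (Set.range (gIn2 k G V)))
  | n+1 => grT2 n * (LinearMap.range (mIn2 k G V) * grT2 0)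

/-- The degree-`d` graded piece of `T_{kG}(kG ⊗ V ⊗ kG)/(R ∪ R')`. -/
def grQT (d : ℕ) : Submodule k (QT k G V R ρ) :=
  (grT2 k G V d).map (toQT k G V R ρ).toLinearMap

end DeformKoszul

open DeformKoszul

/-!
Both algebras have the same universal property: an algebra map out of either one amounts to an
algebra map `φ` out of `kG` and a linear map `ν` out of `V` such that `φ g * ν v = ν (ᵍv) * φ g`
and `v ⊗ w ↦ ν v * ν w` kills `R`. For the second algebra this holds because `kG ⊗ V ⊗ kG` is the
free `kG`-bimodule on `V`, so that a bimodule map out of it is determined by `ν`, and `R'` imposes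
exactly the commutation relation.

As for the gradings, let `P` and `N` be the images of `kG` and `V`. The pieces of degree `d` are
`P (N P)^d` and `P (M P)^d`, where `M = P N P` is the image of `kG ⊗ V ⊗ kG`; they agree because
`P * P = P`.
-/

namespace DeformKoszul

section Monoid

variable {M : Type*} [Monoid M]

theorem eq_mul_pow_of_succ {D : ℕ → M} {n : M} (hD : ∀ i, D (i + 1) = D i * (n * D 0)) (d : ℕ) :
    D d = D 0 * (n * D 0) ^ d := by
  induction d with
  | zero => simp
  | succ d ih => rw [hD, ih, pow_succ, mul_assoc]

theorem mul_sandwich_pow {p : M} (hp : IsIdempotentElem p) (n : M)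
    (d : ℕ) : p * (p * (n * p) * p) ^ d = p * (n * p) ^ d := by
  calc p * (p * (n * p) * p) ^ d
      = p * (p * n * p) ^ d := by simp only [mul_assoc, hp.eq]
    _ = (p * (p * n)) ^ d * p := (mul_pow_mul p (p * n) d).symm
    _ = (p * n) ^ d * p := by rw [← mul_assoc, hp.eq]
    _ = p * (n * p) ^ d := mul_pow_mul p n d

end Monoid

section Algebra

variable {k A A' B M N : Type*} [CommSemiring k] [Semiring A] [Algebra k A] [Semiring A']
  [Algebra k A'] [Semiring B] [Algebra k B] [AddCommMonoid M] [Module k M]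
  [AddCommMonoid N] [Module k N]

theorem algHom_mul'_map (f : A →ₐ[k] A') (μ : M →ₗ[k] A) (ν : N →ₗ[k] A) (t : M ⊗[k] N) :
    f (LinearMap.mul' k A (map μ ν t)) =
      LinearMap.mul' k A' (map (f.toLinearMap ∘ₗ μ) (f.toLinearMap ∘ₗ ν) t) := by
  rw [map_comp]
  exact LinearMap.congr_fun (AlgHom.comp_mul' f) (map μ ν t)

theorem range_mul'_comp_map_s12 (μ : M →ₗ[k] A) (ν : N →ₗ[k] A) :
    (LinearMap.mul' k A ∘ₗ map μ ν).range = μ.range * ν.range := by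
  rw [LinearMap.range_comp, range_map, Submodule.map_map₂, Submodule.mul_eq_map₂]
  rfl

theorem isIdempotentElem_range (φ : B →ₐ[k] A) : IsIdempotentElem φ.toLinearMap.range :=
  φ.range.isIdempotentElem_toSubmodule

theorem map_adjoin_range_eq_range (f : A →ₐ[k] A') (ι : B →ₗ[k] A) (φ : B →ₐ[k] A')
    (hφ : f.toLinearMap ∘ₗ ι = φ.toLinearMap) :
    (Subalgebra.toSubmodule (Algebra.adjoin k (Set.range ι))).map f.toLinearMap =
      φ.toLinearMap.range := by
  have image : f '' Set.range ι = φ.range := by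
    rw [← Set.range_comp, AlgHom.coe_range]
    exact congrArg Set.range (congrArg DFunLike.coe hφ)
  rw [← Subalgebra.map_toSubmodule, AlgHom.map_adjoin, image, Algebra.adjoin_eq]
  rfl

theorem map_eq_range_mul_pow (f : A →ₐ[k] A') {D : ℕ → Submodule k A} {n : Submodule k A}
    {ι : B →ₗ[k] A}
    (hzero : D 0 = Subalgebra.toSubmodule (Algebra.adjoin k (Set.range ι)))
    (hsucc : ∀ i, D (i + 1) = D i * (n * D 0)) (φ : B →ₐ[k] A')
    (hφ : f.toLinearMap ∘ₗ ι = φ.toLinearMap) (d : ℕ) :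
    (D d).map f.toLinearMap =
      φ.toLinearMap.range * (n.map f.toLinearMap * φ.toLinearMap.range) ^ d := by
  rw [eq_mul_pow_of_succ hsucc, Submodule.map_mul, Submodule.map_pow, Submodule.map_mul, hzero,
    map_adjoin_range_eq_range f ι φ hφ]

/-- The map `a ⊗ v ⊗ b ↦ φ a * (ν v * φ b)` extending `ν` to the free `B`-bimodule `B ⊗ V ⊗ B`
on `V`, where `B` acts on `A` through `φ`. -/
def freeBimoduleLift (φ : B →ₐ[k] A) (ν : M →ₗ[k] A) : B ⊗[k] (M ⊗[k] B) →ₗ[k] A :=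
  LinearMap.mul' k A ∘ₗ map φ.toLinearMap (LinearMap.mul' k A ∘ₗ map ν φ.toLinearMap)

@[simp]
theorem freeBimoduleLift_tmul (φ : B →ₐ[k] A) (ν : M →ₗ[k] A) (a : B) (v : M) (b : B) :
    freeBimoduleLift φ ν (a ⊗ₜ (v ⊗ₜ b)) = φ a * (ν v * φ b) :=
  rfl

theorem comp_freeBimoduleLift (f : A →ₐ[k] A') (φ : B →ₐ[k] A) (ν : M →ₗ[k] A) :
    f.toLinearMap ∘ₗ freeBimoduleLift φ ν =
      freeBimoduleLift (f.comp φ) (f.toLinearMap ∘ₗ ν) :=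
  ext_threefold' fun a v b ↦ by simp

theorem range_freeBimoduleLift (φ : B →ₐ[k] A) (ν : M →ₗ[k] A) :
    (freeBimoduleLift φ ν).range =
      φ.toLinearMap.range * (ν.range * φ.toLinearMap.range) := by
  rw [freeBimoduleLift, range_mul'_comp_map_s12, range_mul'_comp_map_s12]

end Algebra

variable {k G V : Type} [Field k] [Group G] [AddCommGroup V] [Module k V]
  (R : Submodule k (V ⊗[k] V)) (ρ : Representation k G V)

section FreeBimodule

variable {A : Type*} [Semiring A] [Algebra k A] (φ : MonoidAlgebra k G →ₐ[k] A) (ν : V →ₗ[k] A)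

theorem freeBimoduleLift_comp_jV : freeBimoduleLift φ ν ∘ₗ jV k G V = ν := by
  ext v
  simp [jV]

theorem freeBimoduleLift_lactM (x : MonoidAlgebra k G) (m : MM k G V) :
    freeBimoduleLift φ ν (lactM k G V x m) = φ x * freeBimoduleLift φ ν m := by
  suffices freeBimoduleLift φ ν ∘ₗ lactM k G V x =
      LinearMap.mulLeft k (φ x) ∘ₗ freeBimoduleLift φ ν from LinearMap.congr_fun this m
  exact ext_threefold' fun a v b ↦ by simp [lactM, mul_assoc]

theorem freeBimoduleLift_ractM (x : MonoidAlgebra k G) (m : MM k G V) :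
    freeBimoduleLift φ ν (ractM k G V x m) = freeBimoduleLift φ ν m * φ x := by
  suffices freeBimoduleLift φ ν ∘ₗ ractM k G V x =
      LinearMap.mulRight k (φ x) ∘ₗ freeBimoduleLift φ ν from LinearMap.congr_fun this m
  exact ext_threefold' fun a v b ↦ by simp [ractM, mul_assoc]

end FreeBimodule

/-- The data of an algebra map out of `T(V)/(R) ⋊ G`: an algebra map `φ` out of `kG` and a linear
map `ν` out of `V` that intertwines the action of `G` with conjugation and satisfies the relations
`R`. -/
structure IsCovariantPair {A : Type*} [Semiring A] [Algebra k A]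
    (φ : MonoidAlgebra k G →ₐ[k] A) (ν : V →ₗ[k] A) : Prop where
  skew (g : G) (v : V) :
    φ (MonoidAlgebra.of k G g) * ν v = ν (ρ g v) * φ (MonoidAlgebra.of k G g)
  quad (r : R) : LinearMap.mul' k A (map ν ν r) = 0

section SkewGroupAlgebra

variable {R ρ} in
theorem toH_eq_of_rel {a b : FreeAlg k G V} (h : GRel k G V R ρ 0 0 0 a b) :
    toH k G V R ρ 0 0 0 a = toH k G V R ρ 0 0 0 b :=
  RingQuot.mkAlgHom_rel k h

/-- The algebra map `kG → S ⋊ G`, which is `gA` as a linear map. -/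
def groupToSkew : MonoidAlgebra k G →ₐ[k] SkewA k G V R ρ :=
  AlgHom.ofLinearMap (gA k G V R ρ)
    (by simpa [gA] using toH_eq_of_rel (R := R) (ρ := ρ) .unit)
    fun x y ↦ by simpa [gA] using (toH_eq_of_rel (.gmul x y)).symm

theorem SkewA.isCovariantPair : IsCovariantPair R ρ (groupToSkew R ρ) (vA k G V R ρ) where
  skew g v := by
    simpa [groupToSkew, gA, vA] using toH_eq_of_rel (R := R) (ρ := ρ) (.act g v)
  quad r := by
    have h : toH k G V R ρ 0 0 0 (mulVV k G V r) = 0 := by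
      simpa using toH_eq_of_rel (ρ := ρ) (.quad r)
    rwa [mulVV, LinearMap.comp_apply, algHom_mul'_map] at h

variable {R ρ} {A : Type*} [Semiring A] [Algebra k A]

theorem SkewA.algHom_ext {f f' : SkewA k G V R ρ →ₐ[k] A}
    (hG : f.comp (groupToSkew R ρ) = f'.comp (groupToSkew R ρ))
    (hV : f.toLinearMap ∘ₗ vA k G V R ρ = f'.toLinearMap ∘ₗ vA k G V R ρ) : f = f' :=
  RingQuot.ringQuot_ext' k f f' <| TensorAlgebra.hom_ext <|
    LinearMap.prod_ext (congrArg AlgHom.toLinearMap hG) hV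

variable {φ : MonoidAlgebra k G →ₐ[k] A} {ν : V →ₗ[k] A}

/-- The algebra map `S ⋊ G → A` given by a covariant pair. -/
def IsCovariantPair.skewLift (h : IsCovariantPair R ρ φ ν) : SkewA k G V R ρ →ₐ[k] A :=
  RingQuot.liftAlgHom k ⟨TensorAlgebra.lift k (φ.toLinearMap.coprod ν), fun a b hab ↦ by
    cases hab with
    | unit => simp [gIn]
    | gmul x y => simp [gIn]
    | act g v => simpa [gIn, vIn] using h.skew g v
    | quad r =>
      rw [mulVV, LinearMap.comp_apply, algHom_mul'_map]
      simpa [vIn, ← LinearMap.comp_assoc] using h.quad r⟩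

theorem IsCovariantPair.skewLift_comp_groupToSkew (h : IsCovariantPair R ρ φ ν) :
    h.skewLift.comp (groupToSkew R ρ) = φ :=
  AlgHom.ext fun x ↦ by simp [skewLift, groupToSkew, gA, gIn, toH]

theorem IsCovariantPair.skewLift_comp_vA (h : IsCovariantPair R ρ φ ν) :
    h.skewLift.toLinearMap ∘ₗ vA k G V R ρ = ν :=
  LinearMap.ext fun v ↦ by simp [skewLift, vA, vIn, toH]

theorem grA_eq_mul_pow (d : ℕ) :
    grA k G V R ρ d = (groupToSkew R ρ).toLinearMap.range *
      ((vA k G V R ρ).range * (groupToSkew R ρ).toLinearMap.range) ^ d := by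
  rw [grA, map_eq_range_mul_pow (toH k G V R ρ 0 0 0) (D := grT k G V) (grT.eq_1 k G V)
    (grT.eq_2 k G V) (groupToSkew R ρ) rfl, ← LinearMap.range_comp]
  rfl

theorem IsCovariantPair.map_skewLift_grA (h : IsCovariantPair R ρ φ ν) (d : ℕ) :
    (grA k G V R ρ d).map h.skewLift.toLinearMap =
      φ.toLinearMap.range * (ν.range * φ.toLinearMap.range) ^ d := by
  rw [grA_eq_mul_pow, Submodule.map_mul, Submodule.map_pow, Submodule.map_mul,
    ← LinearMap.range_comp, ← LinearMap.range_comp, h.skewLift_comp_vA,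
    ← AlgHom.comp_toLinearMap, h.skewLift_comp_groupToSkew]

end SkewGroupAlgebra

section RelativeTensorAlgebra

variable {R ρ} in
theorem toQT_eq_of_rel {a b : Free2 k G V} (h : TRel k G V R ρ a b) :
    toQT k G V R ρ a = toQT k G V R ρ b :=
  RingQuot.mkAlgHom_rel k h

/-- The algebra map `kG → T_{kG}(kG ⊗ V ⊗ kG)/(R ∪ R')`. -/
def groupToQT : MonoidAlgebra k G →ₐ[k] QT k G V R ρ :=
  AlgHom.ofLinearMap ((toQT k G V R ρ).toLinearMap ∘ₗ gIn2 k G V)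
    (by simpa using toQT_eq_of_rel (R := R) (ρ := ρ) .unit)
    fun x y ↦ by simpa using (toQT_eq_of_rel (.gmul x y)).symm

/-- The image of `kG ⊗ V ⊗ kG` in `T_{kG}(kG ⊗ V ⊗ kG)/(R ∪ R')`. -/
def bimoduleToQT : MM k G V →ₗ[k] QT k G V R ρ :=
  (toQT k G V R ρ).toLinearMap ∘ₗ mIn2 k G V

/-- The image of `V` in `T_{kG}(kG ⊗ V ⊗ kG)/(R ∪ R')`, along `v ↦ 1 ⊗ v ⊗ 1`. -/
def vectorToQT : V →ₗ[k] QT k G V R ρ :=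
  bimoduleToQT R ρ ∘ₗ jV k G V

theorem bimoduleToQT_lactM (x : MonoidAlgebra k G) (m : MM k G V) :
    bimoduleToQT R ρ (lactM k G V x m) = groupToQT R ρ x * bimoduleToQT R ρ m := by
  simpa [groupToQT, bimoduleToQT] using (toQT_eq_of_rel (.lact x m)).symm

theorem bimoduleToQT_ractM (x : MonoidAlgebra k G) (m : MM k G V) :
    bimoduleToQT R ρ (ractM k G V x m) = bimoduleToQT R ρ m * groupToQT R ρ x := by
  simpa [groupToQT, bimoduleToQT] using (toQT_eq_of_rel (.ract x m)).symm

theorem bimoduleToQT_eq_freeBimoduleLift :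
    bimoduleToQT R ρ = freeBimoduleLift (groupToQT R ρ) (vectorToQT R ρ) :=
  ext_threefold' fun a v b ↦ by
    have sandwich : a ⊗ₜ (v ⊗ₜ b) = lactM k G V a (ractM k G V b (jV k G V v)) := by
      simp [lactM, ractM, jV]
    rw [sandwich, bimoduleToQT_lactM, bimoduleToQT_ractM, ← sandwich, freeBimoduleLift_tmul]
    rfl

theorem QT.isCovariantPair : IsCovariantPair R ρ (groupToQT R ρ) (vectorToQT R ρ) where
  skew g v := by
    have h : bimoduleToQT R ρ (MonoidAlgebra.of k G g ⊗ₜ (v ⊗ₜ 1)) =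
        bimoduleToQT R ρ (1 ⊗ₜ (ρ g v ⊗ₜ MonoidAlgebra.of k G g)) :=
      toQT_eq_of_rel (.skew g v)
    simpa only [bimoduleToQT_eq_freeBimoduleLift, freeBimoduleLift_tmul, map_one, mul_one,
      one_mul] using h
  quad r := by
    have h : toQT k G V R ρ (mul2VV k G V r) = 0 := by
      simpa using toQT_eq_of_rel (.quad r)
    rwa [mul2VV, LinearMap.comp_apply, algHom_mul'_map] at h

variable {R ρ} {A : Type*} [Semiring A] [Algebra k A]

theorem QT.algHom_ext {f f' : QT k G V R ρ →ₐ[k] A}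
    (hG : f.comp (groupToQT R ρ) = f'.comp (groupToQT R ρ))
    (hV : f.toLinearMap ∘ₗ vectorToQT R ρ = f'.toLinearMap ∘ₗ vectorToQT R ρ) : f = f' := by
  have hM : f.toLinearMap ∘ₗ bimoduleToQT R ρ = f'.toLinearMap ∘ₗ bimoduleToQT R ρ := by
    rw [bimoduleToQT_eq_freeBimoduleLift, comp_freeBimoduleLift, comp_freeBimoduleLift, hG, hV]
  exact RingQuot.ringQuot_ext' k f f' <| TensorAlgebra.hom_ext <|
    LinearMap.prod_ext (congrArg AlgHom.toLinearMap hG) hM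

variable {φ : MonoidAlgebra k G →ₐ[k] A} {ν : V →ₗ[k] A}

/-- The algebra map `T_{kG}(kG ⊗ V ⊗ kG)/(R ∪ R') → A` given by a covariant pair. -/
def IsCovariantPair.qtLift (h : IsCovariantPair R ρ φ ν) : QT k G V R ρ →ₐ[k] A :=
  RingQuot.liftAlgHom k
    ⟨TensorAlgebra.lift k (φ.toLinearMap.coprod (freeBimoduleLift φ ν)), fun a b hab ↦ by
      cases hab with
      | unit => simp [gIn2]
      | gmul x y => simp [gIn2]
      | lact x m => simp [gIn2, mIn2, freeBimoduleLift_lactM]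
      | ract x m => simp [gIn2, mIn2, freeBimoduleLift_ractM]
      | quad r =>
        rw [mul2VV, LinearMap.comp_apply, algHom_mul'_map]
        simpa [mIn2, ← LinearMap.comp_assoc, freeBimoduleLift_comp_jV] using h.quad r
      | skew g v => simpa [mIn2] using h.skew g v⟩

theorem IsCovariantPair.qtLift_comp_groupToQT (h : IsCovariantPair R ρ φ ν) :
    h.qtLift.comp (groupToQT R ρ) = φ :=
  AlgHom.ext fun x ↦ by simp [qtLift, groupToQT, gIn2, toQT]

theorem IsCovariantPair.qtLift_comp_vectorToQT (h : IsCovariantPair R ρ φ ν) :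
    h.qtLift.toLinearMap ∘ₗ vectorToQT R ρ = ν :=
  LinearMap.ext fun v ↦ by simp [qtLift, vectorToQT, bimoduleToQT, mIn2, toQT, jV]

theorem grQT_eq_mul_pow (d : ℕ) :
    grQT k G V R ρ d = (groupToQT R ρ).toLinearMap.range *
      ((vectorToQT R ρ).range * (groupToQT R ρ).toLinearMap.range) ^ d := by
  have image : (mIn2 k G V).range.map (toQT k G V R ρ).toLinearMap =
      (groupToQT R ρ).toLinearMap.range *
        ((vectorToQT R ρ).range * (groupToQT R ρ).toLinearMap.range) := by
    rw [← LinearMap.range_comp, ← range_freeBimoduleLift, ← bimoduleToQT_eq_freeBimoduleLift]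
    rfl
  rw [grQT, map_eq_range_mul_pow (toQT k G V R ρ) (D := grT2 k G V) (grT2.eq_1 k G V)
    (grT2.eq_2 k G V) (groupToQT R ρ) rfl, image,
    mul_sandwich_pow (isIdempotentElem_range (groupToQT R ρ))]

end RelativeTensorAlgebra

/-- The isomorphism `S ⋊ G ≃ T_{kG}(kG ⊗ V ⊗ kG)/(R ∪ R')` matching the universal covariant
pairs. -/
def skewEquivQT : SkewA k G V R ρ ≃ₐ[k] QT k G V R ρ :=
  have hS := SkewA.isCovariantPair R ρ
  have hQ := QT.isCovariantPair R ρ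
  AlgEquiv.ofAlgHom hQ.skewLift hS.qtLift
    (QT.algHom_ext
      (by rw [AlgHom.comp_assoc, hS.qtLift_comp_groupToQT, hQ.skewLift_comp_groupToSkew,
        AlgHom.id_comp])
      (by rw [AlgHom.comp_toLinearMap, LinearMap.comp_assoc, hS.qtLift_comp_vectorToQT,
        hQ.skewLift_comp_vA, AlgHom.toLinearMap_id, LinearMap.id_comp]))
    (SkewA.algHom_ext
      (by rw [AlgHom.comp_assoc, hQ.skewLift_comp_groupToSkew, hS.qtLift_comp_groupToQT,
        AlgHom.id_comp])
      (by rw [AlgHom.comp_toLinearMap, LinearMap.comp_assoc, hQ.skewLift_comp_vA,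
        hS.qtLift_comp_vectorToQT, AlgHom.toLinearMap_id, LinearMap.id_comp]))

theorem map_skewEquivQT_grA (d : ℕ) :
    (grA k G V R ρ d).map (skewEquivQT R ρ).toAlgHom.toLinearMap = grQT k G V R ρ d :=
  ((QT.isCovariantPair R ρ).map_skewLift_grA d).trans (grQT_eq_mul_pow d).symm

end DeformKoszul

theorem skew_group_algebra_iso_relative_tensor_algebra_presentation_general
    (k G V : Type) [Field k] [Group G] [AddCommGroup V] [Module k V]
    (ρ : Representation k G V) (R : Submodule k (V ⊗[k] V)) :
    ∃ e : SkewA k G V R ρ ≃ₐ[k] QT k G V R ρ,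
      ∀ d, Submodule.map (e.toLinearEquiv : SkewA k G V R ρ →ₗ[k] QT k G V R ρ)
        (grA k G V R ρ d) = grQT k G V R ρ d :=
  ⟨skewEquivQT R ρ, map_skewEquivQT_grA R ρ⟩

/-- **Section 2** of Shepler–Witherspoon, "Deforming group actions on Koszul algebras":
for a finite group `G` acting linearly on a finite dimensional vector space `V` and a
`G`-stable subspace `R ⊆ V ⊗ V`, the skew group algebra `S ⋊ G` (for `S = T(V)/(R)`,
presented as the algebra generated by `kG` and `V` subject to `R` and the relations
`g·v = (ᵍv)·g`) is isomorphic **as a graded algebra** to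
`T_{kG}(kG ⊗ V ⊗ kG)/(R ∪ R')`, where elements of `G` have degree 0, elements of `V`
degree 1, and `R' = span_k{g ⊗ v ⊗ 1 − 1 ⊗ ᵍv ⊗ g : v ∈ V, g ∈ G} ⊆ kG ⊗ V ⊗ kG`,
with `R` identified with a subspace of `(kG ⊗ V ⊗ kG) ⊗_{kG} (kG ⊗ V ⊗ kG)` via
`v ⊗ w ↦ (1⊗v⊗1) ⊗ (1⊗w⊗1)`. -/
theorem skew_group_algebra_iso_relative_tensor_algebra_presentation
    (k G V : Type) [Field k] [Group G] [Fintype G] [AddCommGroup V] [Module k V]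
    [FiniteDimensional k V] (h2 : (2 : k) ≠ 0)
    (ρ : Representation k G V) (R : Submodule k (V ⊗[k] V))
    (hR : ∀ (g : G), ∀ x ∈ R, TensorProduct.map (ρ g) (ρ g) x ∈ R) :
    ∃ e : SkewA k G V R ρ ≃ₐ[k] QT k G V R ρ,
      ∀ d, Submodule.map (e.toLinearEquiv : SkewA k G V R ρ →ₗ[k] QT k G V R ρ)
        (grA k G V R ρ d) = grQT k G V R ρ d := by
  exact skew_group_algebra_iso_relative_tensor_algebra_presentation_general k G V ρ R
end
end
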